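/- arXiv:0804.1153 — 4 statements merged into one kernel-verified Lean document; each statement's English description precedes it below -/
import Mathlib

section
/- Let R be a commutative ring, let a be a function assigning to each nonempty finite subset of ℕ an element of R, and define g by the cluster expansion g(Y) = Σ_{P partition of Y} Π_{B block of P} a(B) for every nonempty finite Y ⊆ ℕ. Then for every nonempty finite Y ⊆ ℕ one has the cumulant inversion formula a(Y) = Σ_{P partition of Y} (-1)^{|P|-1} (|P|-1)! Π_{B block of P} g(B). -/
/-!
Set functions under the subset convolution `(u ∗ v)(Y) = ∑_{B ⊆ Y} u(B) v(Y \ B)` behave like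
exponential generating functions, and the cluster expansion says `G = exp a`, where `G` agrees with
`g` on nonempty sets and `G(∅) = 1`. The formula to prove is `a = log G`, and the argument is the
one that identifies `log` through its derivative.

Write `S w f Y = ∑_P w(|P|) ∏_{B ∈ P} f(B)` (`partSum`). Splitting a block off a partition is a
bijection (`sum_split`). Splitting off the block containing a fixed point `y` gives the derivative
rule `partSum_point`; splitting off an arbitrary block gives `partSum_any`, where a factor `|P|`
appears. With `T = S ((-1)^k k!) g`, the second rule shows that `T` is the convolution inverse of
`G` (`conv_inverse`), that is `T = 1 / (1 + g)`. The first rule then shows that the right-hand side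
`K = S ((-1)^(k-1) (k-1)!) g` satisfies `K' ∗ G = g' ∗ T ∗ G = g'`, where the prime restricts the
first factor to sets containing `y`. Since also `a' ∗ G = g'`, strong induction on `Y` gives
`a = K`.
-/

open Finset Nat

namespace CumulantInversion

/-- The partitions of `Y`, each represented by its set of blocks. This avoids the dependence of the
type `Finpartition Y` on `Y` when blocks are added or removed. -/
def partitions (Y : Finset ℕ) : Finset (Finset (Finset ℕ)) :=
  (univ : Finset (Finpartition Y)).image Finpartition.parts

lemma mem_partitions {Y : Finset ℕ} {q : Finset (Finset ℕ)} :
    q ∈ partitions Y ↔ (∀ x ∈ q, x.Nonempty) ∧ (∀ x ∈ q, ∀ y ∈ q, x ≠ y → Disjoint x y) ∧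
      q.biUnion id = Y := by
  simp only [partitions, mem_image, mem_univ, true_and]
  constructor
  · rintro ⟨P, rfl⟩
    exact ⟨fun x hx => P.nonempty_of_mem_parts hx,
      fun x hx y hy h => P.disjoint hx hy h, P.biUnion_parts⟩
  · rintro ⟨h1, h2, h3⟩
    refine ⟨⟨q, ?_, ?_, ?_⟩, rfl⟩
    · rw [Finset.supIndep_iff_pairwiseDisjoint]
      exact fun x hx y hy h => h2 x hx y hy h
    · rw [Finset.sup_eq_biUnion]
      exact h3
    · exact fun h => Finset.not_nonempty_empty (h1 _ h)

lemma sum_finpartition {R : Type*} [CommRing R] (Y : Finset ℕ) (F : Finset (Finset ℕ) → R) :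
    ∑ P : Finpartition Y, F P.parts = ∑ q ∈ partitions Y, F q := by
  rw [partitions, sum_image]
  exact fun P _ Q _ h => Finpartition.ext h

lemma partitions_empty : partitions ∅ = {∅} := by
  ext q
  rw [mem_partitions, mem_singleton]
  constructor
  · rintro ⟨h1, -, h3⟩
    rw [Finset.eq_empty_iff_forall_notMem]
    intro x hx
    obtain ⟨z, hz⟩ := h1 x hx
    have : z ∈ q.biUnion id := mem_biUnion.2 ⟨x, hx, hz⟩
    simp [h3] at this
  · rintro rfl
    simp

/-- A partition of `Y` with a distinguished block is the same as a nonempty subset `C` of `Y`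
together with a partition of `Y \ C`. -/
lemma sum_split {R : Type*} [CommRing R] (Y : Finset ℕ)
    (F : Finset ℕ → Finset (Finset ℕ) → R) :
    ∑ q ∈ partitions Y, ∑ B ∈ q, F B (q.erase B) =
      ∑ C ∈ Y.powerset with C.Nonempty, ∑ q ∈ partitions (Y \ C), F C q := by
  rw [sum_sigma', sum_sigma']
  have key : ∀ (C : Finset ℕ) (q : Finset (Finset ℕ)), C.Nonempty → q ∈ partitions (Y \ C) →
      C ∉ q := by
    intro C q hC hq hCq
    obtain ⟨z, hz⟩ := hC
    have h : z ∈ q.biUnion id := mem_biUnion.2 ⟨C, hCq, hz⟩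
    rw [(mem_partitions.1 hq).2.2] at h
    exact (mem_sdiff.1 h).2 hz
  refine sum_bij' (fun s _ => ⟨s.2, s.1.erase s.2⟩) (fun s _ => ⟨insert s.1 s.2, s.1⟩) ?_ ?_ ?_ ?_ ?_
  · rintro ⟨q, B⟩ h
    simp only [mem_sigma, mem_filter, mem_powerset, mem_partitions] at h ⊢
    obtain ⟨⟨h1, h2, h3⟩, hB⟩ := h
    refine ⟨⟨?_, h1 B hB⟩, fun x hx => h1 x (mem_of_mem_erase hx),
      fun x hx y hy => h2 x (mem_of_mem_erase hx) y (mem_of_mem_erase hy), ?_⟩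
    · rw [← h3]
      exact subset_biUnion_of_mem id hB
    · ext z
      rw [← h3]
      simp only [mem_biUnion, mem_erase, mem_sdiff, id]
      constructor
      · rintro ⟨x, ⟨hx, hxq⟩, hz⟩
        exact ⟨⟨x, hxq, hz⟩, fun hzB => disjoint_left.1 (h2 x hxq B hB hx) hz hzB⟩
      · rintro ⟨⟨x, hxq, hz⟩, hzB⟩
        exact ⟨x, ⟨fun h => hzB (h ▸ hz), hxq⟩, hz⟩
  · rintro ⟨C, q⟩ h
    simp only [mem_sigma, mem_filter, mem_powerset, mem_partitions] at h ⊢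
    obtain ⟨⟨hCY, hC⟩, h1, h2, h3⟩ := h
    have hd : ∀ x ∈ q, Disjoint C x := fun x hx =>
      disjoint_sdiff.mono_right (h3 ▸ subset_biUnion_of_mem id hx)
    refine ⟨⟨?_, ?_, ?_⟩, mem_insert_self _ _⟩
    · intro x hx
      rcases mem_insert.1 hx with rfl | hx
      exacts [hC, h1 x hx]
    · intro x hx y hy hxy
      rcases mem_insert.1 hx with rfl | hxq <;> rcases mem_insert.1 hy with rfl | hyq
      exacts [absurd rfl hxy, hd y hyq, (hd x hxq).symm, h2 x hxq y hyq hxy]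
    · rw [biUnion_insert, h3]
      exact union_sdiff_of_subset hCY
  · rintro ⟨q, B⟩ h
    simp only [mem_sigma] at h
    simp [insert_erase h.2]
  · rintro ⟨C, q⟩ h
    simp only [mem_sigma, mem_filter] at h
    simp [erase_insert (key C q h.1.2 h.2)]
  · rintro ⟨q, B⟩ h
    rfl

variable {R : Type*} [CommRing R]

/-- The sum over all partitions `P` of `Y` of `w(|P|) ∏_{B ∈ P} f(B)`. -/
def partSum (w : ℕ → R) (f : Finset ℕ → R) (Y : Finset ℕ) : R :=
  ∑ q ∈ partitions Y, w q.card * ∏ B ∈ q, f B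

lemma partSum_empty (w : ℕ → R) (f : Finset ℕ → R) : partSum w f ∅ = w 0 := by
  simp [partSum, partitions_empty]

/-- Splitting off the block that contains a fixed point `y`: the derivative rule. -/
lemma partSum_point (w : ℕ → R) (f : Finset ℕ → R) {Y : Finset ℕ} {y : ℕ} (hy : y ∈ Y) :
    partSum w f Y =
      ∑ C ∈ Y.powerset with y ∈ C, f C * partSum (fun k => w (k + 1)) f (Y \ C) := by
  have h := sum_split Y (fun B q => if y ∈ B then w (q.card + 1) * (f B * ∏ C ∈ q, f C) else 0)
  have hL : ∀ q ∈ partitions Y, (∑ B ∈ q, if y ∈ B then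
      w ((q.erase B).card + 1) * (f B * ∏ C ∈ q.erase B, f C) else 0) =
      w q.card * ∏ B ∈ q, f B := by
    intro q hq
    obtain ⟨-, h2, h3⟩ := mem_partitions.1 hq
    obtain ⟨B, hB, hyB⟩ := mem_biUnion.1 (h3 ▸ hy)
    rw [sum_eq_single_of_mem B hB]
    · rw [if_pos (by exact hyB), card_erase_add_one hB, mul_prod_erase _ _ hB]
    · intro C hC hne
      exact if_neg fun hyC => disjoint_left.1 (h2 C hC B hB hne) hyC hyB
  rw [sum_congr rfl hL] at h
  rw [partSum, h, sum_filter, sum_filter]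
  refine sum_congr rfl fun C _ => ?_
  by_cases hyC : y ∈ C
  · have hC : C.Nonempty := ⟨y, hyC⟩
    simp only [hyC, hC, if_true, partSum, mul_sum]
    exact sum_congr rfl fun q _ => by ring
  · simp [hyC]

/-- Splitting off an arbitrary block: each partition is counted once per block. -/
lemma partSum_any (w : ℕ → R) (f : Finset ℕ → R) (Y : Finset ℕ) :
    ∑ C ∈ Y.powerset with C.Nonempty, f C * partSum w f (Y \ C) =
      partSum (fun k => (k : R) * w (k - 1)) f Y := by
  have h := sum_split Y (fun B q => w q.card * (f B * ∏ C ∈ q, f C))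
  have hL : ∀ q ∈ partitions Y, (∑ B ∈ q,
      w (q.erase B).card * (f B * ∏ C ∈ q.erase B, f C)) =
      ((q.card : R) * w (q.card - 1)) * ∏ B ∈ q, f B := by
    intro q _
    rw [sum_congr rfl (g := fun _ => w (q.card - 1) * ∏ B ∈ q, f B), sum_const, nsmul_eq_mul,
      mul_assoc]
    intro B hB
    rw [card_erase_of_mem hB, mul_prod_erase _ _ hB]
  rw [sum_congr rfl hL] at h
  rw [partSum, h]
  refine sum_congr rfl fun C _ => ?_
  rw [partSum, mul_sum]
  exact sum_congr rfl fun q _ => by ring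

/-- The coefficients `(-1)^k k!`, those of `1 / (1 + x)` as an exponential generating function. -/
def invCoeff (R : Type*) [CommRing R] (k : ℕ) : R := (-1) ^ k * ((k ! : ℕ) : R)

/-- `partSum invCoeff g` is the convolution inverse of any `G` extending `g` by `G ∅ = 1`. -/
lemma conv_inverse (g G : Finset ℕ → R) (h0 : G ∅ = 1)
    (hG : ∀ Y : Finset ℕ, Y.Nonempty → G Y = g Y) (Y : Finset ℕ) :
    ∑ C ∈ Y.powerset, G C * partSum (invCoeff R) g (Y \ C) = if Y = ∅ then 1 else 0 := by
  rcases Y.eq_empty_or_nonempty with rfl | hY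
  · simp [partSum_empty, invCoeff, h0]
  rw [if_neg hY.ne_empty, ← sum_filter_add_sum_filter_not _ (fun C : Finset ℕ => C.Nonempty)]
  have h1 : {C ∈ Y.powerset | ¬ C.Nonempty} = {∅} := by
    ext C
    simp only [mem_filter, mem_powerset, not_nonempty_iff_eq_empty, mem_singleton]
    exact ⟨fun h => h.2, fun h => ⟨h ▸ empty_subset _, h⟩⟩
  rw [h1, sum_singleton, h0, one_mul, sdiff_empty,
    sum_congr rfl (g := fun C => g C * partSum (invCoeff R) g (Y \ C)), partSum_any, partSum,
    partSum, ← sum_add_distrib]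
  · refine sum_eq_zero fun q hq => ?_
    have hq0 : q.card ≠ 0 := by
      intro h
      obtain rfl := card_eq_zero.1 h
      have := (mem_partitions.1 hq).2.2
      exact hY.ne_empty (by simpa using this.symm)
    obtain ⟨k, hk⟩ := Nat.exists_eq_succ_of_ne_zero hq0
    simp only [hk, invCoeff, Nat.succ_eq_add_one, Nat.add_sub_cancel, Nat.factorial_succ]
    push_cast
    ring
  · intro C hC
    rw [hG C (mem_filter.1 hC).2]

/-- Associativity of the subset convolution, with the first factor restricted to sets containing
`y`. -/
lemma conv_assoc (u v G : Finset ℕ → R) (Y : Finset ℕ) (y : ℕ) :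
    ∑ B ∈ Y.powerset with y ∈ B, (∑ C ∈ B.powerset with y ∈ C, u C * v (B \ C)) * G (Y \ B) =
      ∑ C ∈ Y.powerset with y ∈ C, u C * ∑ D ∈ (Y \ C).powerset, G D * v ((Y \ C) \ D) := by
  simp only [sum_mul, mul_sum]
  rw [sum_sigma', sum_sigma']
  refine sum_bij' (fun s _ => ⟨s.2, Y \ s.1⟩) (fun s _ => ⟨Y \ s.2, s.1⟩) ?_ ?_ ?_ ?_ ?_
  · rintro ⟨B, C⟩ h
    simp only [mem_sigma, mem_filter, mem_powerset] at h ⊢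
    exact ⟨⟨h.2.1.trans h.1.1, h.2.2⟩, sdiff_subset_sdiff subset_rfl h.2.1⟩
  · rintro ⟨C, D⟩ h
    simp only [mem_sigma, mem_filter, mem_powerset] at h ⊢
    obtain ⟨⟨hC, hy⟩, hD⟩ := h
    have hCD : C ⊆ Y \ D := fun z hz =>
      mem_sdiff.2 ⟨hC hz, fun hzD => (mem_sdiff.1 (hD hzD)).2 hz⟩
    exact ⟨⟨sdiff_subset, hCD hy⟩, hCD, hy⟩
  · rintro ⟨B, C⟩ h
    simp only [mem_sigma, mem_filter, mem_powerset] at h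
    simp [inter_eq_right.2 h.1.1]
  · rintro ⟨C, D⟩ h
    simp only [mem_sigma, mem_filter, mem_powerset] at h
    simp [inter_eq_right.2 (h.2.trans sdiff_subset)]
  · rintro ⟨B, C⟩ h
    simp only [mem_sigma, mem_filter, mem_powerset] at h
    have : (Y \ C) \ (Y \ B) = B \ C := by
      ext z
      have := @h.1.1 z
      simp only [mem_sdiff]
      tauto
    simp only [this]
    ring

/-- The coefficients `(-1)^(k-1) (k-1)!` of the logarithm. The value at `k = 0` is irrelevant, a
nonempty set having no partition with zero blocks. -/
def logCoeff (R : Type*) [CommRing R] (k : ℕ) : R := (-1) ^ (k - 1) * (((k - 1)! : ℕ) : R)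

/-- The differential equation `K' ∗ G = g'` of the logarithm `K` of `G`. -/
lemma log_deriv (g G : Finset ℕ → R) (h0 : G ∅ = 1)
    (hG : ∀ Y : Finset ℕ, Y.Nonempty → G Y = g Y) {Y : Finset ℕ} {y : ℕ} (hy : y ∈ Y) :
    ∑ B ∈ Y.powerset with y ∈ B, partSum (logCoeff R) g B * G (Y \ B) = g Y := by
  have hlog : (fun k => logCoeff R (k + 1)) = invCoeff R := by
    funext k
    simp [logCoeff, invCoeff]
  rw [sum_congr rfl (g := fun B => (∑ C ∈ B.powerset with y ∈ C,
    g C * partSum (invCoeff R) g (B \ C)) * G (Y \ B)), conv_assoc]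
  · simp only [conv_inverse g G h0 hG]
    rw [sum_eq_single_of_mem Y (by simp [hy])]
    · simp
    · intro C hC hne
      rw [if_neg, mul_zero]
      rw [sdiff_eq_empty_iff_subset]
      exact fun h => hne (Subset.antisymm (mem_powerset.1 (mem_filter.1 hC).1) h)
  · intro B hB
    rw [partSum_point _ _ (mem_filter.1 hB).2, hlog]

end CumulantInversion

open CumulantInversion in
/-- Cumulant inversion formula: if `g` is given by the cluster expansion
`g(Y) = ∑_{P partition of Y} ∏_{B ∈ P} a(B)`, then
`a(Y) = ∑_{P partition of Y} (-1)^{|P|-1} (|P|-1)! ∏_{B ∈ P} g(B)`. -/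
theorem cumulant_inversion {R : Type*} [CommRing R]
    (a g : Finset ℕ → R)
    (hg : ∀ Y : Finset ℕ, Y.Nonempty →
      g Y = ∑ P : Finpartition Y, ∏ B ∈ P.parts, a B) :
    ∀ Y : Finset ℕ, Y.Nonempty →
      a Y = ∑ P : Finpartition Y,
        (-1 : R) ^ (P.parts.card - 1) * (((P.parts.card - 1)! : ℕ) : R) *
          ∏ B ∈ P.parts, g B := by
  set G : Finset ℕ → R := partSum (fun _ => 1) a with hGdef
  have h0 : G ∅ = 1 := partSum_empty _ _
  have hG : ∀ Y : Finset ℕ, Y.Nonempty → G Y = g Y := by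
    intro Y hY
    rw [hg Y hY, sum_finpartition Y (fun q => ∏ B ∈ q, a B)]
    simp [hGdef, partSum]
  suffices H : ∀ Y : Finset ℕ, Y.Nonempty → a Y = partSum (logCoeff R) g Y by
    intro Y hY
    rw [H Y hY]
    exact (sum_finpartition Y (fun q => logCoeff R q.card * ∏ B ∈ q, g B)).symm
  intro Y
  induction Y using Finset.strongInduction with
  | H Y ih =>
    intro hY
    obtain ⟨y, hy⟩ := id hY
    -- Both `a` and the logarithm of `G` solve the same equation; only the terms `B = Y` can differ.
    have e1 : ∑ B ∈ Y.powerset with y ∈ B, a B * G (Y \ B) = g Y := by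
      rw [← hG Y hY, hGdef, partSum_point _ _ hy]
    have e2 := log_deriv g G h0 hG hy
    have hYm : Y ∈ {B ∈ Y.powerset | y ∈ B} := by simp [hy]
    rw [← add_sum_erase _ _ hYm, sdiff_self, bot_eq_empty, h0, mul_one] at e1 e2
    rw [sum_congr rfl (g := fun B => partSum (logCoeff R) g B * G (Y \ B))] at e1
    · exact add_right_cancel (e1.trans e2.symm)
    · intro B hB
      obtain ⟨hne, hB⟩ := mem_erase.1 hB
      obtain ⟨hBY, hyB⟩ := mem_filter.1 hB
      rw [ih B ((mem_powerset.1 hBY).ssubset_of_ne hne) ⟨y, hyB⟩]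
end

section
/- Let R be a commutative ring, let g be a function assigning to each nonempty finite subset of ℕ an element of R, and define a by a(Y) := Σ_{P partition of Y} (-1)^{|P|-1} (|P|-1)! Π_{B block of P} g(B) for every nonempty finite Y ⊆ ℕ. Then a solves the cluster-expansion recurrence: for every nonempty finite Y ⊆ ℕ, g(Y) = Σ_{P partition of Y} Π_{B block of P} a(B). -/
/-!
Call `Z(Y) = ∑_P ∏_{B ∈ P} a(B)`, with `Z(∅) = 1`, and extend `g` by `g(∅) = 1`. Fix `x ∈ Y`.
Singling out the block of `P` containing `x` gives `Z(Y) = ∑_{x ∈ C ⊆ Y} a(C) Z(Y \ C)`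
(`sum_prod_eq_sum_block`). By strong induction on `Y` it is enough that `g` satisfies the same
recurrence, `g(Y) = ∑_{x ∈ C ⊆ Y} a(C) g(Y \ C)` (`cumulant_recurrence`); this is the set-function
form of `g' = (log g)' g`. To see it, insert the definition of `a(C)`: the term `C = Y` yields
each partition `Q` of `Y` with weight `(-1)^(n-1) (n-1)!`, where `n = |Q|`, while the terms
`C ≠ Y` yield `Q` once for each of its `n - 1` blocks `Y \ C` avoiding `x`, with weight
`(-1)^(n-2) (n-2)!`. These cancel unless `n = 1`, which leaves `g(Y)`.

Both steps rest on the bijection between partitions of `Y` with a marked block `B` and pairs of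
a nonempty `B ⊆ Y` and a partition of `Y \ B` (`sum_marked_block`).
-/

open Finset Nat

/-- Summing over partitions of `Y` with a marked block `B` amounts to summing over nonempty
`B ⊆ Y` and partitions of `Y \ B`. -/
lemma sum_marked_block {R : Type*} [CommRing R] (Y : Finset ℕ)
    (F : Finset ℕ → Finset (Finset ℕ) → R) :
    ∑ P : Finpartition Y, ∑ B ∈ P.parts, F B (P.parts.erase B) =
      ∑ B ∈ Y.powerset with B.Nonempty, ∑ Q : Finpartition (Y \ B), F B Q.parts := by
  have key : ∀ (P : Finpartition Y) (B : Finset ℕ), B ∈ P.parts →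
      (P.parts.erase B).sup id = Y \ B := by
    intro P B hB
    ext y
    simp only [Finset.mem_sup, Finset.mem_erase, id, Finset.mem_sdiff]
    constructor
    · rintro ⟨C, ⟨hCB, hC⟩, hy⟩
      exact ⟨P.subset hC hy, fun hyB => hCB (P.eq_of_mem_parts hC hB hy hyB)⟩
    · rintro ⟨hy, hyB⟩
      obtain ⟨C, hC, hyC⟩ := P.exists_mem hy
      exact ⟨C, ⟨fun h => hyB (h ▸ hyC), hC⟩, hyC⟩
  have notMem : ∀ (B : Finset ℕ), B.Nonempty → ∀ Q : Finpartition (Y \ B), B ∉ Q.parts := by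
    rintro B ⟨y, hy⟩ Q hB
    exact (Finset.mem_sdiff.1 (Q.subset hB hy)).2 hy
  rw [Finset.sum_sigma', Finset.sum_sigma']
  refine Finset.sum_bij'
    (fun p hp => ⟨p.2, p.1.ofSubset (Finset.erase_subset p.2 _)
      (key p.1 p.2 (Finset.mem_sigma.1 hp).2)⟩)
    (fun q hq => ⟨q.2.extend (b := q.1) (c := Y)
      (by
        have := (Finset.mem_filter.1 (Finset.mem_sigma.1 hq).1).2
        exact this.ne_empty)
      Finset.sdiff_disjoint
      (by
        have := (Finset.mem_filter.1 (Finset.mem_sigma.1 hq).1).1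
        exact Finset.sdiff_union_of_subset (Finset.mem_powerset.1 this)), q.1⟩)
    ?_ ?_ ?_ ?_ ?_
  · rintro ⟨P, B⟩ hp
    have hB : B ∈ P.parts := (Finset.mem_sigma.1 hp).2
    simp [P.subset hB, P.nonempty_of_mem_parts hB]
  · rintro ⟨B, Q⟩ hq
    simp [Finpartition.extend]
  · rintro ⟨P, B⟩ hp
    have hB : B ∈ P.parts := (Finset.mem_sigma.1 hp).2
    refine Sigma.ext (Finpartition.ext ?_) HEq.rfl
    exact Finset.insert_erase hB
  · rintro ⟨B, Q⟩ hq
    have hB := (Finset.mem_filter.1 (Finset.mem_sigma.1 hq).1).2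
    refine Sigma.ext rfl (heq_of_eq (Finpartition.ext ?_))
    exact Finset.erase_insert (notMem B hB Q)
  · rintro ⟨P, B⟩ hp
    rfl

/-- Recurrence for the cluster sum, obtained by marking the block that contains `x`. -/
lemma sum_prod_eq_sum_block {R : Type*} [CommRing R] (a : Finset ℕ → R)
    (Y : Finset ℕ) (x : ℕ) (hx : x ∈ Y) :
    ∑ P : Finpartition Y, ∏ B ∈ P.parts, a B =
      ∑ C ∈ Y.powerset with x ∈ C,
        a C * ∑ Q : Finpartition (Y \ C), ∏ B ∈ Q.parts, a B := by
  have h := sum_marked_block Y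
    (fun B S => if x ∈ B then a B * ∏ C ∈ S, a C else 0)
  have hl : ∀ P : Finpartition Y, (∑ B ∈ P.parts, if x ∈ B then
      a B * ∏ C ∈ P.parts.erase B, a C else 0) = ∏ B ∈ P.parts, a B := by
    intro P
    have hp := P.part_mem.2 hx
    rw [Finset.sum_eq_single_of_mem _ hp, if_pos (P.mem_part_self.2 hx),
      Finset.mul_prod_erase _ _ hp]
    intro B hB hne
    exact if_neg fun hxB => hne (P.part_eq_of_mem hB hxB).symm
  simp only [hl] at h
  rw [h]
  symm
  have hsub : (Y.powerset.filter (x ∈ ·)) ⊆ Y.powerset.filter (·.Nonempty) := by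
    intro C hC
    rw [Finset.mem_filter] at hC ⊢
    exact ⟨hC.1, x, hC.2⟩
  rw [← Finset.sum_subset hsub]
  · refine Finset.sum_congr rfl fun C hC => ?_
    simp [(Finset.mem_filter.1 hC).2, Finset.mul_sum]
  · intro C hC hC'
    have : x ∉ C := fun hxC => hC' (Finset.mem_filter.2 ⟨(Finset.mem_filter.1 hC).1, hxC⟩)
    simp [this]

/-- The coefficient of an `n`-block partition in the cumulant expansion. -/
def cumulantCoeff (R : Type*) [CommRing R] (n : ℕ) : R :=
  (-1 : R) ^ (n - 1) * (((n - 1)! : ℕ) : R)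

/-- The recurrence `g(Y) = ∑_{x ∈ C ⊆ Y} a(C) g(Y \ C)` with `g(∅) = 1`; the term `C = Y` is
written separately and the others are indexed by `B = Y \ C`. -/
lemma cumulant_recurrence {R : Type*} [CommRing R] (a g : Finset ℕ → R)
    (ha : ∀ Y : Finset ℕ, Y.Nonempty →
      a Y = ∑ P : Finpartition Y, cumulantCoeff R P.parts.card * ∏ B ∈ P.parts, g B)
    (Y : Finset ℕ) (x : ℕ) (hx : x ∈ Y) :
    a Y + ∑ B ∈ Y.powerset with (B.Nonempty ∧ x ∉ B), a (Y \ B) * g B = g Y := by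
  have h := sum_marked_block Y
    (fun B S => if x ∉ B then (cumulantCoeff R S.card * ∏ C ∈ S, g C) * g B else 0)
  have hr : ∑ B ∈ Y.powerset with (B.Nonempty ∧ x ∉ B), a (Y \ B) * g B =
      ∑ B ∈ Y.powerset with B.Nonempty, ∑ Q : Finpartition (Y \ B),
        if x ∉ B then (cumulantCoeff R Q.parts.card * ∏ C ∈ Q.parts, g C) * g B else 0 := by
    rw [← Finset.filter_filter, Finset.sum_filter]
    refine Finset.sum_congr rfl fun B _ => ?_
    by_cases hxB : x ∈ B
    · simp [hxB]
    · rw [ha (Y \ B) ⟨x, Finset.mem_sdiff.2 ⟨hx, hxB⟩⟩]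
      simp [hxB, Finset.sum_mul]
  have hl : ∀ P : Finpartition Y, (∑ B ∈ P.parts, if x ∉ B then
      (cumulantCoeff R (P.parts.erase B).card * ∏ C ∈ P.parts.erase B, g C) * g B else 0) =
      ((P.parts.card - 1 : ℕ) : R) * cumulantCoeff R (P.parts.card - 1) *
        ∏ B ∈ P.parts, g B := by
    intro P
    have hp := P.part_mem.2 hx
    rw [← Finset.add_sum_erase _ _ hp, if_neg (not_not.2 (P.mem_part_self.2 hx)), zero_add,
      ← Finset.card_erase_of_mem hp, mul_assoc, ← nsmul_eq_mul]
    refine Finset.sum_eq_card_nsmul fun B hB => ?_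
    have hB' := Finset.mem_of_mem_erase hB
    have hxB : x ∉ B := fun hxB => Finset.ne_of_mem_erase hB (P.part_eq_of_mem hB' hxB).symm
    rw [if_pos hxB, mul_assoc, Finset.prod_erase_mul _ _ hB', Finset.card_erase_of_mem hB',
      Finset.card_erase_of_mem hp]
  have hY : Y ≠ ⊥ := Finset.ne_empty_of_mem hx
  rw [hr, ← h, ha Y ⟨x, hx⟩]
  simp only [hl]
  rw [← Finset.sum_add_distrib, Finset.sum_eq_single (Finpartition.indiscrete hY)]
  · simp [cumulantCoeff]
  · intro P _ hP
    have hpos : 0 < P.parts.card := (P.parts_nonempty hY).card_pos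
    have hne : P.parts.card ≠ 1 := by
      intro h1
      obtain ⟨B, hB⟩ := Finset.card_eq_one.1 h1
      have hBY : B = Y := by
        have := P.sup_parts
        simpa [hB] using this
      exact hP (Finpartition.ext (by simp [hB, hBY]))
    obtain ⟨m, hm⟩ : ∃ m, P.parts.card = m + 2 := ⟨P.parts.card - 2, by omega⟩
    rw [hm]
    simp only [cumulantCoeff, Nat.add_sub_cancel, show m + 2 - 1 = m + 1 by omega,
      Nat.factorial_succ, pow_succ]
    push_cast
    ring
  · simp

/-- The cumulant expansion
`a(Y) = ∑_{P partition of Y} (-1)^{|P|-1} (|P|-1)! ∏_{B ∈ P} g(B)`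
solves the cluster-expansion recurrence
`g(Y) = ∑_{P partition of Y} ∏_{B ∈ P} a(B)`. -/
theorem cumulant_solves_cluster_expansion {R : Type*} [CommRing R]
    (a g : Finset ℕ → R)
    (ha : ∀ Y : Finset ℕ, Y.Nonempty →
      a Y = ∑ P : Finpartition Y,
        (-1 : R) ^ (P.parts.card - 1) * (((P.parts.card - 1)! : ℕ) : R) *
          ∏ B ∈ P.parts, g B) :
    ∀ Y : Finset ℕ, Y.Nonempty →
      g Y = ∑ P : Finpartition Y, ∏ B ∈ P.parts, a B := by
  intro Y
  induction Y using Finset.strongInduction with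
  | H Y ih =>
  rintro ⟨x, hx⟩
  rw [sum_prod_eq_sum_block a Y x hx, ← cumulant_recurrence a g ha Y x hx]
  have hmem : Y ∈ Y.powerset.filter (x ∈ ·) := by simp [hx]
  rw [← Finset.add_sum_erase _ _ hmem]
  congr 1
  · have h0 : ∀ S : Finset ℕ, S = ∅ → ∑ Q : Finpartition S, ∏ B ∈ Q.parts, a B = 1 := by
      rintro S rfl
      have : ∀ Q : Finpartition (∅ : Finset ℕ), Q.parts = ∅ :=
        fun Q => Q.parts_eq_empty_iff.2 rfl
      have hc : Fintype.card (Finpartition (∅ : Finset ℕ)) = 1 :=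
        Fintype.card_eq_one_iff.2 ⟨Finpartition.empty _, fun Q => Finpartition.ext (this Q)⟩
      simp [this, hc]
    rw [h0 _ (Finset.sdiff_self Y), mul_one]
  · -- Complementation `B ↦ Y \ B` matches the two index sets.
    refine Finset.sum_bij' (fun B _ => Y \ B) (fun C _ => Y \ C) ?_ ?_ ?_ ?_ ?_
    · intro B hB
      simp only [Finset.mem_filter, Finset.mem_powerset] at hB
      obtain ⟨hBY, ⟨y, hy⟩, hxB⟩ := hB
      simp only [Finset.mem_erase, Finset.mem_filter, Finset.mem_powerset, Finset.mem_sdiff]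
      refine ⟨fun h => ?_, Finset.sdiff_subset, hx, hxB⟩
      exact (Finset.mem_sdiff.1 (h.symm ▸ hBY hy : y ∈ Y \ B)).2 hy
    · intro C hC
      simp only [Finset.mem_erase, Finset.mem_filter, Finset.mem_powerset] at hC
      obtain ⟨hne, hCY, hxC⟩ := hC
      simp only [Finset.mem_filter, Finset.mem_powerset, Finset.mem_sdiff]
      refine ⟨Finset.sdiff_subset, ?_, fun h => h.2 hxC⟩
      exact Finset.sdiff_nonempty.2 fun h => hne (hCY.antisymm h)
    · intro B hB
      exact Finset.sdiff_sdiff_eq_self (Finset.mem_powerset.1 (Finset.mem_filter.1 hB).1)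
    · intro C hC
      exact Finset.sdiff_sdiff_eq_self
        (Finset.mem_powerset.1 (Finset.mem_filter.1 (Finset.mem_of_mem_erase hC)).1)
    · intro B hB
      simp only [Finset.mem_filter, Finset.mem_powerset] at hB
      obtain ⟨hBY, hBne, hxB⟩ := hB
      have hlt : B ⊂ Y := ⟨hBY, fun h => hxB (h hx)⟩
      rw [Finset.sdiff_sdiff_eq_self hBY, ← ih B hlt hBne]
end

section
/- Let s be a finite set with |s| ≥ 2 and let Z be a nonempty proper subset of s. Then Σ_P (-1)^{|P|-1} (|P|-1)! = 0, where the sum runs over all partitions P of s such that Z is entirely contained in a single block of P, and |P| is the number of blocks of P. -/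
/-!
Fix `x ∈ s \ Z`. Removing `x` from the admissible partitions of `s` gives the admissible partitions
of `s \ {x}`, and each such partition with `k ≥ 1` blocks arises from one partition with `k + 1`
blocks (`x` forms a singleton block) and from `k` partitions with `k` blocks (`x` joins one of the
`k` blocks). These contribute `(-1)^k k! + k * (-1)^(k-1) (k-1)! = 0`.

To avoid changing the ground set, this is organised as a bijection between pairs `(P, t)`, where
`{x}` and `t ≠ {x}` are blocks of `P`, and partitions in which `{x}` is not a block: `mergePoint`
moves `x` into `t`, and `splitPoint` isolates `x` from its block.
-/

open Finset Nat

/-- The partition obtained from `P`, in which `{x}` is a block, by moving `x` into the block `t`. -/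
def mergePoint {α : Type*} [DecidableEq α] {s : Finset α} (P : Finpartition s) (x : α)
    (t : Finset α) (hx : {x} ∈ P.parts) (ht : t ∈ P.parts) : Finpartition s :=
  Finpartition.ofExistsUnique (insert (insert x t) ((P.parts.erase {x}).erase t))
    (by
      have h1 := P.subset hx
      have h2 := P.subset ht
      have h3 := fun b (hb : b ∈ P.parts) => P.subset hb
      grind)
    (by
      intro a ha
      obtain ⟨b, hb, hab⟩ := P.exists_mem ha
      have h1 := fun c d (hc : c ∈ P.parts) (hd : d ∈ P.parts) (h : a ∈ c) (h' : a ∈ d) =>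
        P.eq_of_mem_parts hc hd h h'
      by_cases h : a ∈ insert x t
      · refine ⟨insert x t, ⟨by simp, h⟩, ?_⟩
        rintro c ⟨hc, hac⟩
        grind
      · refine ⟨b, ⟨by grind, hab⟩, ?_⟩
        rintro c ⟨hc, hac⟩
        grind)
    (by
      have := P.empty_notMem_parts
      have := insert_ne_empty x t
      grind)

/-- The partition obtained from `Q` by removing `x` from its block and making `{x}` a block. The
hypothesis `{x} ∉ Q.parts` ensures that what is left of the block of `x` is nonempty. -/
def splitPoint {α : Type*} [DecidableEq α] {s : Finset α} (Q : Finpartition s) (x : α)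
    (hx : x ∈ s) (hQ : {x} ∉ Q.parts) : Finpartition s :=
  Finpartition.ofExistsUnique
    (insert {x} (insert ((Q.part x).erase x) (Q.parts.erase (Q.part x))))
    (by
      have h1 := Q.part_subset x
      have h3 := fun b (hb : b ∈ Q.parts) => Q.subset hb
      grind)
    (by
      intro a ha
      have hp := Q.part_mem.2 hx
      have hxp := Q.mem_part_self.2 hx
      obtain ⟨b, hb, hab⟩ := Q.exists_mem ha
      have h1 := fun c d (hc : c ∈ Q.parts) (hd : d ∈ Q.parts) (h : a ∈ c) (h' : a ∈ d) =>
        Q.eq_of_mem_parts hc hd h h'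
      by_cases h : a = x
      · refine ⟨{x}, by grind, ?_⟩
        rintro c ⟨hc, hac⟩
        grind
      · by_cases h' : a ∈ Q.part x
        · refine ⟨(Q.part x).erase x, by grind, ?_⟩
          rintro c ⟨hc, hac⟩
          grind
        · refine ⟨b, by grind, ?_⟩
          rintro c ⟨hc, hac⟩
          grind)
    (by
      have := Q.empty_notMem_parts
      have hp := Q.part_mem.2 hx
      have hxp := Q.mem_part_self.2 hx
      have h2 : (Q.part x).erase x ≠ ∅ := by
        intro h
        rw [Finset.erase_eq_empty_iff] at h
        grind
      have := singleton_ne_empty x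
      grind)

section

variable {α : Type*} [DecidableEq α] {s : Finset α}

lemma mergePoint_parts (P : Finpartition s) (x : α)
    (t : Finset α) (hx : {x} ∈ P.parts) (ht : t ∈ P.parts) :
    (mergePoint P x t hx ht).parts = insert (insert x t) ((P.parts.erase {x}).erase t) := rfl

lemma splitPoint_parts (Q : Finpartition s) (x : α) (hx : x ∈ s) (hQ : {x} ∉ Q.parts) :
    (splitPoint Q x hx hQ).parts =
      insert {x} (insert ((Q.part x).erase x) (Q.parts.erase (Q.part x))) := rfl

lemma eq_singleton_of_mem {P : Finpartition s} {x : α} (hx : {x} ∈ P.parts) {b : Finset α}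
    (hb : b ∈ P.parts) (hxb : x ∈ b) : b = {x} :=
  P.eq_of_mem_parts hb hx hxb (mem_singleton_self x)

lemma card_mergePoint (P : Finpartition s) (x : α) (t : Finset α) (hx : {x} ∈ P.parts)
    (ht : t ∈ P.parts) (htx : t ≠ {x}) :
    (mergePoint P x t hx ht).parts.card = P.parts.card - 1 := by
  rw [mergePoint_parts, card_insert_of_notMem, card_erase_of_mem (by grind), card_erase_of_mem hx]
  · have : 1 < P.parts.card := one_lt_card.2 ⟨t, ht, {x}, hx, htx⟩
    omega
  · have := fun b hb => eq_singleton_of_mem hx (b := b) hb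
    grind

lemma singleton_notMem_mergePoint (P : Finpartition s) (x : α) (t : Finset α) (hx : {x} ∈ P.parts)
    (ht : t ∈ P.parts) (htx : t ≠ {x}) : {x} ∉ (mergePoint P x t hx ht).parts := by
  rw [mergePoint_parts]
  have hxt : x ∉ t := fun h => htx (eq_singleton_of_mem hx ht h)
  obtain ⟨y, hy⟩ := P.nonempty_of_mem_parts ht
  intro h
  rcases mem_insert.1 h with h | h
  · have : y ∈ ({x} : Finset α) := h ▸ mem_insert_of_mem hy
    grind
  · grind

lemma part_mergePoint (P : Finpartition s) (x : α) (t : Finset α) (hx : {x} ∈ P.parts)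
    (ht : t ∈ P.parts) : (mergePoint P x t hx ht).part x = insert x t :=
  Finpartition.part_eq_of_mem _ (by simp [mergePoint_parts]) (mem_insert_self x t)

lemma splitPoint_mergePoint (P : Finpartition s) (x : α) (t : Finset α) (hx : {x} ∈ P.parts)
    (ht : t ∈ P.parts) (htx : t ≠ {x}) (hxs : x ∈ s) :
    splitPoint (mergePoint P x t hx ht) x hxs (singleton_notMem_mergePoint P x t hx ht htx) = P := by
  have hxt : x ∉ t := fun h => htx (eq_singleton_of_mem hx ht h)
  have h1 := fun b hb => eq_singleton_of_mem hx (b := b) hb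
  apply Finpartition.ext
  rw [splitPoint_parts, part_mergePoint, mergePoint_parts, erase_insert hxt]
  ext b
  grind

lemma part_erase_mem_splitPoint (Q : Finpartition s) (x : α) (hx : x ∈ s) (hQ : {x} ∉ Q.parts) :
    (Q.part x).erase x ∈ (splitPoint Q x hx hQ).parts := by
  simp [splitPoint_parts]

lemma singleton_mem_splitPoint (Q : Finpartition s) (x : α) (hx : x ∈ s) (hQ : {x} ∉ Q.parts) :
    {x} ∈ (splitPoint Q x hx hQ).parts := by
  simp [splitPoint_parts]

lemma mergePoint_splitPoint (Q : Finpartition s) (x : α) (hx : x ∈ s) (hQ : {x} ∉ Q.parts) :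
    mergePoint (splitPoint Q x hx hQ) x ((Q.part x).erase x) (singleton_mem_splitPoint Q x hx hQ)
      (part_erase_mem_splitPoint Q x hx hQ) = Q := by
  have hp := Q.part_mem.2 hx
  have hxp := Q.mem_part_self.2 hx
  obtain ⟨y, hy⟩ := Finpartition.nonempty_of_mem_parts _ (part_erase_mem_splitPoint Q x hx hQ)
  have h1 : (Q.part x).erase x ∉ Q.parts := fun h => by
    have := Q.eq_of_mem_parts h hp hy (mem_of_mem_erase hy)
    grind
  apply Finpartition.ext
  rw [mergePoint_parts, splitPoint_parts, insert_erase hxp]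
  ext b
  grind

end

/-- Let `s` be a finite set with `|s| ≥ 2` and `Z` a nonempty proper subset of `s`.
Then the sum of `(-1)^{|P|-1} (|P|-1)!` over all partitions `P` of `s` such that `Z`
is entirely contained in a single block of `P` vanishes. -/
theorem sum_partitions_block_containing_vanishes {α : Type*} [DecidableEq α]
    (s Z : Finset α) (hs : 2 ≤ s.card) (hZ : Z.Nonempty) (hZs : Z ⊂ s) :
    (∑ P ∈ Finset.univ.filter
        (fun P : Finpartition s => ∃ B ∈ P.parts, Z ⊆ B),
        (-1 : ℤ) ^ (P.parts.card - 1) * (((P.parts.card - 1)! : ℕ) : ℤ)) = 0 := by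
  obtain ⟨x, hxs, hxZ⟩ := exists_of_ssubset hZs
  have hne : ∀ B : Finset α, Z ⊆ B → B ≠ {x} := by
    rintro B hB rfl
    obtain ⟨z, hz⟩ := hZ
    have := hB hz
    grind
  rw [← sum_filter_add_sum_filter_not _ (fun P : Finpartition s => {x} ∈ P.parts)]
  -- `k! = k * (k - 1)!` is spread over the `k` blocks other than `{x}`.
  have key : ∀ P ∈ (univ.filter (fun P : Finpartition s => ∃ B ∈ P.parts, Z ⊆ B)).filter
      (fun P => {x} ∈ P.parts),
      (-1 : ℤ) ^ (P.parts.card - 1) * (((P.parts.card - 1)! : ℕ) : ℤ) =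
      ∑ _t ∈ P.parts.erase {x},
        -((-1 : ℤ) ^ (P.parts.card - 1 - 1) * (((P.parts.card - 1 - 1)! : ℕ) : ℤ)) := by
    intro P hP
    simp only [mem_filter, mem_univ, true_and] at hP
    obtain ⟨⟨B, hB, hZB⟩, hx⟩ := hP
    have h1 : 1 < P.parts.card := one_lt_card.2 ⟨B, hB, {x}, hx, hne B hZB⟩
    rw [sum_const, card_erase_of_mem hx]
    obtain ⟨k, hk⟩ : ∃ k, P.parts.card = k + 2 := ⟨P.parts.card - 2, by omega⟩
    rw [hk]
    simp only [show k + 2 - 1 = k + 1 by omega, Nat.add_sub_cancel, Nat.factorial_succ, pow_succ,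
      nsmul_eq_mul]
    push_cast
    ring
  rw [sum_congr rfl key, sum_sigma', sum_neg_distrib, neg_add_eq_zero]
  refine sum_bij'
    (fun p hp => mergePoint p.1 x p.2 (by simp at hp; grind) (by simp at hp; grind))
    (fun Q hQ => ⟨splitPoint Q x hxs (by simp at hQ; grind), (Q.part x).erase x⟩)
    ?_ ?_ ?_ ?_ ?_
  · rintro ⟨P, t⟩ hp
    simp only [mem_sigma, mem_filter, mem_univ, true_and, mem_erase] at hp ⊢
    obtain ⟨⟨⟨B, hB, hZB⟩, hx⟩, htx, ht⟩ := hp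
    refine ⟨?_, singleton_notMem_mergePoint P x t hx ht htx⟩
    have := hne B hZB
    by_cases hBt : B = t
    · exact ⟨insert x t, by simp [mergePoint_parts], by grind⟩
    · exact ⟨B, by simp [mergePoint_parts, *], hZB⟩
  · intro Q hQ
    simp only [mem_sigma, mem_filter, mem_univ, true_and, mem_erase] at hQ ⊢
    obtain ⟨⟨B, hB, hZB⟩, hx⟩ := hQ
    refine ⟨⟨?_, singleton_mem_splitPoint Q x hxs hx⟩, ?_, part_erase_mem_splitPoint Q x hxs hx⟩
    · by_cases hBt : B = Q.part x
      · exact ⟨_, part_erase_mem_splitPoint Q x hxs hx, by grind⟩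
      · exact ⟨B, by simp [splitPoint_parts, *], hZB⟩
    · intro h
      have : x ∈ (Q.part x).erase x := h ▸ mem_singleton_self x
      simp at this
  · rintro ⟨P, t⟩ hp
    simp only [mem_sigma, mem_filter, mem_univ, true_and, mem_erase] at hp
    obtain ⟨⟨-, hx⟩, htx, ht⟩ := hp
    refine Sigma.ext (splitPoint_mergePoint P x t hx ht htx hxs) (heq_of_eq ?_)
    simp only [part_mergePoint]
    exact erase_insert fun h => htx (eq_singleton_of_mem hx ht h)
  · intro Q hQ
    simp only [mem_filter] at hQ
    exact mergePoint_splitPoint Q x hxs hQ.2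
  · rintro ⟨P, t⟩ hp
    simp only [mem_sigma, mem_filter, mem_univ, true_and, mem_erase] at hp
    simp only [card_mergePoint P x t hp.1.2 hp.2.2 hp.2.1]
end

section
/- Let s be a finite set with |s| = n ≥ 1 and let 1 ≤ k ≤ n. Then (k-1)! · S(n,k) ≤ k^{n-1}, where S(n,k) denotes the number of partitions of s into exactly k nonempty blocks (the Stirling number of the second kind). -/
/-!
Multiplying by `k`, the claim becomes `k! · S(n,k) ≤ k^n`. The left side counts pairs consisting of
a partition `P` of `s` into `k` blocks and a labelling of its blocks by `Fin k`. Such a pair yields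
the function `s → Fin k` sending a point to the label of its block; the blocks of `P` are the
fibres of this function, so the function determines first `P` and then the labelling. There are
`k^n` functions in all.
-/

open Finset Nat

/-- The function sending a point of `s` to the label of its block. -/
def blockLabel {α : Type*} [DecidableEq α] {s : Finset α} {k : ℕ}
    (P : Finpartition s) (e : P.parts ≃ Fin k) (x : s) : Fin k :=
  e ⟨P.part x, P.part_mem.2 x.2⟩

/-- The fibres of the labelling function are exactly the blocks. -/
lemma blockLabel_eq_iff {α : Type*} [DecidableEq α] {s : Finset α} {k : ℕ}
    (P : Finpartition s) (e : P.parts ≃ Fin k) (x y : s) :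
    blockLabel P e x = blockLabel P e y ↔ (x : α) ∈ P.part y := by
  rw [P.mem_part_iff_part_eq_part x.2 y.2]
  simp [blockLabel]

lemma parts_subset_of_part_eq {α : Type*} [DecidableEq α] {s : Finset α}
    {P Q : Finpartition s} (h : ∀ x ∈ s, P.part x = Q.part x) : P.parts ⊆ Q.parts := by
  intro t ht
  obtain ⟨x, hx⟩ := P.nonempty_of_mem_parts ht
  have hxs : x ∈ s := P.subset ht hx
  rw [← P.part_eq_of_mem ht hx, h x hxs]
  exact Q.part_mem.2 hxs

lemma blockLabel_injective {α : Type*} [DecidableEq α] (s : Finset α) (k : ℕ) :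
    Function.Injective
      (fun p : (Σ P : {P : Finpartition s // P.parts.card = k}, (P.1.parts ≃ Fin k)) =>
        blockLabel p.1.1 p.2) := by
  rintro ⟨⟨P, hP⟩, e⟩ ⟨⟨Q, hQ⟩, e'⟩ h
  replace h : blockLabel P e = blockLabel Q e' := h
  have hpart : ∀ x ∈ s, P.part x = Q.part x := by
    intro x hx
    ext y
    by_cases hy : y ∈ s
    · rw [← blockLabel_eq_iff P e ⟨y, hy⟩ ⟨x, hx⟩, ← blockLabel_eq_iff Q e' ⟨y, hy⟩ ⟨x, hx⟩, h]
    · exact ⟨fun h' => absurd (P.part_subset x h') hy, fun h' => absurd (Q.part_subset x h') hy⟩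
  obtain rfl : P = Q := Finpartition.ext <|
    (parts_subset_of_part_eq hpart).antisymm
      (parts_subset_of_part_eq fun x hx => (hpart x hx).symm)
  obtain rfl : e = e' := by
    ext ⟨t, ht⟩
    obtain ⟨x, hx⟩ := P.nonempty_of_mem_parts ht
    obtain rfl := P.part_eq_of_mem ht hx
    exact congrArg Fin.val (congrFun h ⟨x, P.subset ht hx⟩)
  rfl

/-- For a finite set `s` with `|s| = n ≥ 1` and `1 ≤ k ≤ n`, one has
`(k-1)! · S(n,k) ≤ k^{n-1}`, where `S(n,k)` is the number of partitions of `s`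
into exactly `k` nonempty blocks (the Stirling number of the second kind). -/
theorem factorial_mul_stirling_le {α : Type*} [DecidableEq α]
    (s : Finset α) (n k : ℕ) (hn : s.card = n) (h1 : 1 ≤ n) (hk1 : 1 ≤ k)
    (hkn : k ≤ n) :
    (k - 1)! *
        (Finset.univ.filter (fun P : Finpartition s => P.parts.card = k)).card ≤
      k ^ (n - 1) := by
  have key := Fintype.card_le_of_injective _ (blockLabel_injective s k)
  have hcard : ∀ P : {P : Finpartition s // P.parts.card = k},
      Fintype.card (P.1.parts ≃ Fin k) = k ! := by
    intro P
    have hc : Fintype.card P.1.parts = k := by simp [P.2]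
    rw [Fintype.card_equiv (Fintype.equivFinOfCardEq hc), hc]
  rw [Fintype.card_sigma, Finset.sum_congr rfl (fun P _ => hcard P), Finset.sum_const,
    Finset.card_univ, Fintype.card_subtype, smul_eq_mul, Fintype.card_fun, Fintype.card_fin,
    Fintype.card_coe, hn] at key
  refine Nat.le_of_mul_le_mul_left ?_ hk1
  rw [← mul_assoc, Nat.mul_factorial_pred (by omega), mul_pow_sub_one (by omega), mul_comm]
  exact key
end
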